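/- (Finite Sanov Theorem) Let q be a strictly positive pmf on a finite set X of size m and let Π be a set of pmfs on X that is the closure of its interior with I(Π||q) < ∞. Then (1/n) log P(ν^n ∈ Π) → -I(Π||q) as n → ∞, where ν^n is the empirical type of n i.i.d. draws from q and I(Π||q) = inf_{p∈Π} I(p||q). -/

import Mathlib

open Finset Real Filter

def simplexSet (X : Type*) [Fintype X] : Set (X → ℝ) :=
  {p | (∀ x, 0 ≤ p x) ∧ ∑ x, p x = 1}

/-- I-divergence (KL divergence), real-valued. -/
noncomputable def Idiv {X : Type*} [Fintype X] (p q : X → ℝ) : ℝ :=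
  ∑ x, p x * Real.log (p x / q x)

/-- Empirical type of the sample `s`. -/
noncomputable def empType {X : Type*} [Fintype X] [DecidableEq X] (n : ℕ)
    (s : Fin n → X) : X → ℝ :=
  fun x => ((Finset.univ.filter (fun j => s j = x)).card : ℝ) / n

open Classical in
/-- Probability that the empirical type of `n` i.i.d. draws from `q` lies in `Π`. -/
noncomputable def typeProb {X : Type*} [Fintype X] [DecidableEq X] (q : X → ℝ)
    (Pi : Set (X → ℝ)) (n : ℕ) : ℝ :=
  ∑ s : Fin n → X, if empType n s ∈ Pi then ∏ j, q (s j) else 0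

/-!
A sample `s` of type `e` satisfies `∏ q (s j) = (∏ p (s j)) * exp (-n ∑ e x log (p x / q x))` for
every `p` that charges it. For the upper bound take `p = e`: there are at most `(n + 1) ^ |X|`
types, and the samples of type `e` have `e`-probability at most one. For the lower bound take a
fixed `p` in the relative interior of `Π`, strictly positive and nearly minimizing `I(p‖q)`, and
restrict to samples with type near `p`. Their `p`-probability tends to one: this law of large
numbers is the upper bound itself with `q = p`, since `I(·‖p)` is bounded away from zero off a
neighbourhood of `p`.
-/

open scoped Topology

section ExponentialRate

lemma tendsto_one_div_mul_log_const (C : ℝ) :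
    Tendsto (fun n : ℕ => 1 / (n : ℝ) * log C) atTop (𝓝 0) := by
  simpa using (tendsto_one_div_atTop_nhds_zero_nat (𝕜 := ℝ)).mul_const (log C)

lemma tendsto_one_div_mul_log_add_one_pow (m : ℕ) :
    Tendsto (fun n : ℕ => 1 / (n : ℝ) * log (((n : ℝ) + 1) ^ m)) atTop (𝓝 0) := by
  have log_div_sub_one : Tendsto (fun x : ℝ => log x ^ 1 / (1 * x + -1)) atTop (𝓝 0) :=
    tendsto_pow_log_div_mul_add_atTop 1 (-1) 1 one_ne_zero
  have log_add_one_div : Tendsto (fun n : ℕ => log ((n : ℝ) + 1) / n) atTop (𝓝 0) := by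
    simpa [Function.comp_def] using log_div_sub_one.comp
      (tendsto_atTop_add_const_right _ (1 : ℝ) tendsto_natCast_atTop_atTop)
  refine (mul_zero (m : ℝ) ▸ log_add_one_div.const_mul (m : ℝ)).congr fun n => ?_
  rw [log_pow]
  ring

lemma tendsto_one_div_mul_log_mul_exp_neg {g : ℕ → ℝ} (hg_pos : ∀ n, 0 < g n)
    (hg : Tendsto (fun n : ℕ => 1 / (n : ℝ) * log (g n)) atTop (𝓝 0)) (c : ℝ) :
    Tendsto (fun n : ℕ => 1 / (n : ℝ) * log (g n * exp (-(n * c)))) atTop (𝓝 (-c)) := by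
  refine (zero_add (-c) ▸ hg.add_const (-c)).congr' ?_
  filter_upwards [eventually_ne_atTop 0] with n hn
  rw [log_mul (hg_pos n).ne' (exp_pos _).ne', log_exp]
  field_simp

lemma tendsto_one_div_mul_log_of_exp_bounds {u : ℕ → ℝ} {C I : ℝ} (m : ℕ) (hC : 0 < C)
    (upper : ∀ n : ℕ, u n ≤ ((n : ℝ) + 1) ^ m * exp (-(n * I)))
    (lower : ∀ c, I < c → ∀ᶠ n : ℕ in atTop, C * exp (-(n * c)) ≤ u n) :
    Tendsto (fun n : ℕ => 1 / (n : ℝ) * log (u n)) atTop (𝓝 (-I)) := by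
  refine tendsto_order.2 ⟨fun a ha => ?_, fun b hb => ?_⟩
  · obtain ⟨c, I_lt_c, c_lt⟩ := exists_between (lt_neg_of_lt_neg ha)
    have lower_rate := tendsto_one_div_mul_log_mul_exp_neg (fun _ => hC)
      (tendsto_one_div_mul_log_const C) c
    filter_upwards [lower c I_lt_c, lower_rate.eventually_const_lt (lt_neg_of_lt_neg c_lt)]
      with n lower_n lt_rate
    exact lt_rate.trans_le (by gcongr)
  · have upper_rate := tendsto_one_div_mul_log_mul_exp_neg (fun n => by positivity)
      (tendsto_one_div_mul_log_add_one_pow m) I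
    filter_upwards [lower (I + 1) (lt_add_one I), upper_rate.eventually_lt_const hb]
      with n lower_n rate_lt
    have u_pos : 0 < u n := lt_of_lt_of_le (by positivity) lower_n
    refine lt_of_le_of_lt ?_ rate_lt
    gcongr
    exact upper n

lemma tendsto_add_one_pow_mul_exp_neg (m : ℕ) {c : ℝ} (hc : 0 < c) :
    Tendsto (fun n : ℕ => ((n : ℝ) + 1) ^ m * exp (-(n * c))) atTop (𝓝 0) := by
  have abs_exp_neg_lt_one : |exp (-c)| < 1 := by
    rw [abs_of_pos (exp_pos _), exp_lt_one_iff]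
    linarith
  have shifted := ((tendsto_pow_const_mul_const_pow_of_abs_lt_one m abs_exp_neg_lt_one).comp
    (tendsto_add_atTop_nat 1)).const_mul (exp c)
  refine (mul_zero (exp c) ▸ shifted).congr fun n => ?_
  simp only [Function.comp_apply, Nat.cast_add, Nat.cast_one]
  rw [← exp_nat_mul, mul_left_comm, ← exp_add]
  push_cast
  ring_nf

end ExponentialRate

section Simplex

variable {X : Type*} [Fintype X]

lemma isCompact_simplexSet : IsCompact (simplexSet X) :=
  isCompact_stdSimplex ℝ X

lemma simplexSet_subset_closure_pos :
    simplexSet X ⊆ closure {p ∈ simplexSet X | ∀ x, 0 < p x} := by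
  intro p hp
  have hcard : (0 : ℝ) < Fintype.card X := by
    have : Nonempty X := not_isEmpty_iff.1 fun _ => by simpa using hp.2
    exact_mod_cast Fintype.card_pos
  let u : X → ℝ := fun _ => (Fintype.card X : ℝ)⁻¹
  have hu : u ∈ simplexSet X := ⟨fun _ => (inv_pos.2 hcard).le, by simp [u, hcard.ne']⟩
  refine closure_mono ?_ (segment_subset_closure_openSegment (left_mem_segment ℝ p u))
  rintro _ ⟨a, b, ha, hb, hab, rfl⟩
  refine ⟨convex_stdSimplex ℝ X hp hu ha.le hb.le hab, fun x => ?_⟩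
  exact add_pos_of_nonneg_of_pos (mul_nonneg ha.le (hp.1 x)) (mul_pos hb (inv_pos.2 hcard))

lemma dense_pos_simplexSet : Dense {p : simplexSet X | ∀ x, 0 < p.1 x} := by
  refine Subtype.dense_iff.2 (simplexSet_subset_closure_pos.trans (closure_mono ?_))
  exact fun p hp => ⟨⟨p, hp.1⟩, hp.2, rfl⟩

end Simplex

section Divergence

variable {X : Type*} [Fintype X] {p q : X → ℝ}

lemma continuous_Idiv_left (hq : ∀ x, 0 < q x) : Continuous fun p : X → ℝ => Idiv p q := by
  have summand_eq (p : X → ℝ) (x : X) :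
      p x * log (p x / q x) = p x * log (p x) - p x * log (q x) := by
    rcases eq_or_ne (p x) 0 with h | h
    · simp [h]
    · rw [log_div h (hq x).ne', mul_sub]
  simp only [Idiv, summand_eq]
  fun_prop

lemma Idiv_eq_sum_mul_klFun (hq : ∀ x, 0 < q x) (hsum : ∑ x, p x = ∑ x, q x) :
    Idiv p q = ∑ x, q x * InformationTheory.klFun (p x / q x) := by
  have summand_eq (x : X) : q x * InformationTheory.klFun (p x / q x) =
      p x * log (p x / q x) + (q x - p x) := by
    have := (hq x).ne'
    rw [InformationTheory.klFun]
    field_simp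
    ring
  simp only [summand_eq, sum_add_distrib, sum_sub_distrib, hsum, sub_self, add_zero, Idiv]

lemma Idiv_pos (hp : ∀ x, 0 ≤ p x) (hq : ∀ x, 0 < q x) (hsum : ∑ x, p x = ∑ x, q x)
    (hne : p ≠ q) : 0 < Idiv p q := by
  have ratio_nonneg (x : X) : 0 ≤ p x / q x := div_nonneg (hp x) (hq x).le
  have summand_nonneg (x : X) : 0 ≤ InformationTheory.klFun (p x / q x) :=
    InformationTheory.klFun_nonneg (ratio_nonneg x)
  obtain ⟨y, hy⟩ := Function.ne_iff.1 hne
  have klFun_ne_zero : InformationTheory.klFun (p y / q y) ≠ 0 := by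
    rwa [Ne, InformationTheory.klFun_eq_zero_iff (ratio_nonneg y), div_eq_one_iff_eq (hq y).ne']
  rw [Idiv_eq_sum_mul_klFun hq hsum]
  exact sum_pos' (fun x _ => mul_nonneg (hq x).le (summand_nonneg x))
    ⟨y, mem_univ y, mul_pos (hq y) ((summand_nonneg y).lt_of_ne' klFun_ne_zero)⟩

lemma bddBelow_Idiv_image (hq : ∀ x, 0 < q x) {A : Set (X → ℝ)} (hA : A ⊆ simplexSet X) :
    BddBelow ((fun p => Idiv p q) '' A) :=
  (isCompact_simplexSet.bddBelow_image (continuous_Idiv_left hq).continuousOn).mono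
    (Set.image_mono hA)

lemma exists_pos_Idiv_lt_of_sInf_lt (hq : ∀ x, 0 < q x) {A : Set (X → ℝ)} (hA : A.Nonempty)
    (hA_sub : A ⊆ simplexSet X)
    (hreg : (Subtype.val ⁻¹' A : Set (simplexSet X)) ⊆ closure (interior (Subtype.val ⁻¹' A)))
    {c : ℝ} (hc : sInf ((fun p => Idiv p q) '' A) < c) :
    ∃ p ∈ simplexSet X, (∀ x, 0 < p x) ∧ A ∈ 𝓝[simplexSet X] p ∧ Idiv p q < c := by
  obtain ⟨_, ⟨p₀, hp₀, rfl⟩, Idiv_p₀_lt⟩ := exists_lt_of_csInf_lt (hA.image _) hc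
  have sublevel_open : IsOpen {p : simplexSet X | Idiv p.1 q < c} :=
    isOpen_lt ((continuous_Idiv_left hq).comp continuous_subtype_val) continuous_const
  have nonempty : ({p : simplexSet X | Idiv p.1 q < c} ∩
      interior (Subtype.val ⁻¹' A)).Nonempty :=
    mem_closure_iff.1 (hreg (a := ⟨p₀, hA_sub hp₀⟩) hp₀) _ sublevel_open Idiv_p₀_lt
  obtain ⟨p, ⟨Idiv_p_lt, p_mem_interior⟩, p_pos⟩ :=
    dense_pos_simplexSet.inter_open_nonempty _ (sublevel_open.inter isOpen_interior) nonempty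
  exact ⟨p, p.2, p_pos,
    preimage_coe_mem_nhds_subtype.1 (mem_interior_iff_mem_nhds.1 p_mem_interior), Idiv_p_lt⟩

end Divergence

section Types

variable {X : Type*} [Fintype X] [DecidableEq X] {n : ℕ}

lemma sum_comp_eq_mul_sum_empType (s : Fin n → X) (f : X → ℝ) :
    ∑ j, f (s j) = n * ∑ x, empType n s x * f x := by
  rcases eq_or_ne n 0 with rfl | hn
  · simp
  rw [← Fintype.sum_fiberwise' s f, mul_sum]
  refine sum_congr rfl fun x _ => ?_
  have : (n : ℝ) ≠ 0 := by exact_mod_cast hn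
  simp only [sum_const, nsmul_eq_mul, empType, card_univ, Fintype.card_subtype]
  field_simp

lemma empType_mem_simplexSet (hn : n ≠ 0) (s : Fin n → X) : empType n s ∈ simplexSet X := by
  refine ⟨fun x => by unfold empType; positivity, ?_⟩
  have total := sum_comp_eq_mul_sum_empType s fun _ => 1
  simpa [hn] using total

lemma empType_apply_self_pos (s : Fin n → X) (j : Fin n) : 0 < empType n s (s j) := by
  have count_pos : 0 < #{i | s i = s j} := card_pos.2 ⟨j, by simp⟩
  have n_pos : 0 < n := j.pos
  unfold empType
  positivity

lemma card_image_empType_le (n : ℕ) :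
    #(univ.image fun s : Fin n → X => empType n s) ≤ (n + 1) ^ Fintype.card X := by
  classical
  let ofCounts (c : X → Fin (n + 1)) (x : X) : ℝ := (c x : ℕ) / n
  have image_subset : (univ.image fun s : Fin n → X => empType n s) ⊆ univ.image ofCounts := by
    refine image_subset_iff.2 fun s _ => mem_image.2 ?_
    have count_lt (x : X) : #{j | s j = x} < n + 1 :=
      Nat.lt_succ_of_le ((card_le_univ _).trans_eq (Fintype.card_fin n))
    exact ⟨fun x => ⟨_, count_lt x⟩, mem_univ _, rfl⟩
  calc _ ≤ #(univ.image ofCounts) := card_le_card image_subset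
    _ ≤ #(univ : Finset (X → Fin (n + 1))) := card_image_le
    _ = (n + 1) ^ Fintype.card X := by simp

lemma sum_prod_empType_le (n : ℕ) :
    ∑ s : Fin n → X, ∏ j, empType n s (s j) ≤ ((n : ℝ) + 1) ^ Fintype.card X := by
  rcases eq_or_ne n 0 with rfl | hn
  · simp
  let types : Finset (X → ℝ) := univ.image fun s : Fin n → X => empType n s
  have fiber_le (e : X → ℝ) (he : e ∈ types) :
      ∑ s : Fin n → X with empType n s = e, ∏ j, empType n s (s j) ≤ 1 := by
    obtain ⟨t, -, rfl⟩ := mem_image.1 he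
    obtain ⟨type_nonneg, type_sum⟩ := empType_mem_simplexSet hn t
    calc ∑ s : Fin n → X with empType n s = empType n t, ∏ j, empType n s (s j)
        = ∑ s : Fin n → X with empType n s = empType n t, ∏ j, empType n t (s j) :=
          sum_congr rfl fun s hs => by rw [(mem_filter.1 hs).2]
      _ ≤ ∑ s : Fin n → X, ∏ j, empType n t (s j) :=
          sum_le_sum_of_subset_of_nonneg (filter_subset _ _)
            fun s _ _ => prod_nonneg fun j _ => type_nonneg _
      _ = 1 := by rw [← Fintype.sum_pow, type_sum, one_pow]
  calc ∑ s : Fin n → X, ∏ j, empType n s (s j)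
      = ∑ e ∈ types, ∑ s : Fin n → X with empType n s = e, ∏ j, empType n s (s j) :=
        (sum_fiberwise_of_maps_to (fun s hs => mem_image_of_mem _ hs) _).symm
    _ ≤ ∑ _e ∈ types, 1 := sum_le_sum fiber_le
    _ ≤ ((n : ℝ) + 1) ^ Fintype.card X := by
        rw [sum_const, nsmul_one]
        exact_mod_cast card_image_empType_le n

lemma prod_comp_eq_prod_mul_exp {p q : X → ℝ} (s : Fin n → X) (hp : ∀ j, 0 < p (s j))
    (hq : ∀ j, 0 < q (s j)) :
    ∏ j, q (s j) =
      (∏ j, p (s j)) * exp (-(n * ∑ x, empType n s x * log (p x / q x))) := by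
  rw [← sum_comp_eq_mul_sum_empType s fun x => log (p x / q x), ← sum_neg_distrib, exp_sum,
    ← prod_mul_distrib]
  refine prod_congr rfl fun j _ => ?_
  have := hp j
  rw [exp_neg, exp_log (div_pos (hp j) (hq j))]
  field_simp

end Types

section TypeProb

variable {X : Type*} [Fintype X] [DecidableEq X] {p q : X → ℝ}

lemma typeProb_add_typeProb_compl (hp : ∑ x, p x = 1) (A : Set (X → ℝ)) (n : ℕ) :
    typeProb p A n + typeProb p Aᶜ n = 1 := by
  calc typeProb p A n + typeProb p Aᶜ n = ∑ s : Fin n → X, ∏ j, p (s j) := by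
        unfold typeProb
        rw [← sum_add_distrib]
        refine sum_congr rfl fun s _ => ?_
        by_cases hs : empType n s ∈ A <;> simp [hs]
    _ = 1 := by rw [← Fintype.sum_pow, hp, one_pow]

lemma typeProb_nonneg (hq : ∀ x, 0 ≤ q x) (A : Set (X → ℝ)) (n : ℕ) : 0 ≤ typeProb q A n := by
  refine sum_nonneg fun s _ => ?_
  split_ifs
  exacts [prod_nonneg fun j _ => hq _, le_rfl]

lemma typeProb_mono_of_inter_simplexSet (hq : ∀ x, 0 ≤ q x) {A B : Set (X → ℝ)} {n : ℕ}
    (hn : n ≠ 0) (hAB : A ∩ simplexSet X ⊆ B) : typeProb q A n ≤ typeProb q B n := by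
  refine sum_le_sum fun s _ => ?_
  have prod_q_nonneg : 0 ≤ ∏ j, q (s j) := prod_nonneg fun j _ => hq _
  by_cases hs : empType n s ∈ A
  · rw [if_pos hs, if_pos (hAB ⟨hs, empType_mem_simplexSet hn s⟩)]
  · rw [if_neg hs]
    split_ifs
    exacts [prod_q_nonneg, le_rfl]

lemma typeProb_le_pow_mul_exp (hq : ∀ x, 0 < q x) {A : Set (X → ℝ)} {I : ℝ}
    (hI : ∀ p ∈ A, I ≤ Idiv p q) (n : ℕ) :
    typeProb q A n ≤ ((n : ℝ) + 1) ^ Fintype.card X * exp (-(n * I)) := by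
  calc typeProb q A n ≤ ∑ s : Fin n → X, (∏ j, empType n s (s j)) * exp (-(n * I)) := by
        refine sum_le_sum fun s _ => ?_
        have prod_empType_nonneg : 0 ≤ ∏ j, empType n s (s j) :=
          prod_nonneg fun j _ => (empType_apply_self_pos s j).le
        split_ifs with hs
        · rw [prod_comp_eq_prod_mul_exp s (empType_apply_self_pos s) fun j => hq _]
          gcongr
          exact hI _ hs
        · positivity
    _ ≤ ((n : ℝ) + 1) ^ Fintype.card X * exp (-(n * I)) := by
        rw [← sum_mul]
        gcongr
        exact sum_prod_empType_le n

lemma typeProb_mul_exp_le (hp : ∀ x, 0 < p x) (hq : ∀ x, 0 < q x) {A : Set (X → ℝ)} {c : ℝ}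
    (hc : ∀ e ∈ A, ∑ x, e x * log (p x / q x) ≤ c) (n : ℕ) :
    typeProb p A n * exp (-(n * c)) ≤ typeProb q A n := by
  unfold typeProb
  rw [sum_mul]
  refine sum_le_sum fun s _ => ?_
  split_ifs with hs
  · have prod_p_nonneg : 0 ≤ ∏ j, p (s j) := prod_nonneg fun j _ => (hp _).le
    rw [prod_comp_eq_prod_mul_exp s (fun j => hp _) fun j => hq _]
    gcongr
    exact hc _ hs
  · simp

lemma tendsto_typeProb_one (hp : ∀ x, 0 < p x) (hp_sum : ∑ x, p x = 1) {U : Set (X → ℝ)}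
    (hU : U ∈ 𝓝[simplexSet X] p) : Tendsto (typeProb p U) atTop (𝓝 1) := by
  obtain ⟨V, V_open, p_mem_V, V_inter_subset⟩ := mem_nhdsWithin.1 hU
  have Idiv_pos_off_V : ∀ e ∈ simplexSet X \ V, 0 < Idiv e p := fun e ⟨he, he_V⟩ =>
    Idiv_pos he.1 hp (he.2.trans hp_sum.symm) fun h => he_V (h ▸ p_mem_V)
  obtain ⟨c, c_pos, c_le⟩ := (isCompact_simplexSet.diff V_open).exists_forall_le'
    (continuous_Idiv_left hp).continuousOn Idiv_pos_off_V
  have compl_inter_subset : Uᶜ ∩ simplexSet X ⊆ simplexSet X \ V := fun e ⟨he_U, he⟩ =>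
    ⟨he, fun he_V => he_U (V_inter_subset ⟨he_V, he⟩)⟩
  have compl_tendsto : Tendsto (typeProb p Uᶜ) atTop (𝓝 0) := by
    refine tendsto_of_tendsto_of_tendsto_of_le_of_le' tendsto_const_nhds
      (tendsto_add_one_pow_mul_exp_neg (Fintype.card X) c_pos)
      (.of_forall (typeProb_nonneg (fun x => (hp x).le) Uᶜ)) ?_
    filter_upwards [eventually_ne_atTop 0] with n hn
    exact (typeProb_mono_of_inter_simplexSet (fun x => (hp x).le) hn compl_inter_subset).trans
      (typeProb_le_pow_mul_exp hp c_le n)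
  refine (sub_zero (1 : ℝ) ▸ compl_tendsto.const_sub 1).congr fun n => ?_
  linarith [typeProb_add_typeProb_compl hp_sum U n]

lemma eventually_half_mul_exp_le_typeProb (hp : ∀ x, 0 < p x) (hp_sum : ∑ x, p x = 1)
    (hq : ∀ x, 0 < q x) {A : Set (X → ℝ)} (hA : A ∈ 𝓝[simplexSet X] p) {c : ℝ}
    (hc : Idiv p q < c) : ∀ᶠ n : ℕ in atTop, 1 / 2 * exp (-(n * c)) ≤ typeProb q A n := by
  let L (e : X → ℝ) : ℝ := ∑ x, e x * log (p x / q x)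
  have L_continuous : Continuous L := by fun_prop
  have L_lt_mem : {e | L e < c} ∈ 𝓝[simplexSet X] p :=
    mem_nhdsWithin_of_mem_nhds ((isOpen_lt L_continuous continuous_const).mem_nhds hc)
  filter_upwards [eventually_ne_atTop 0, (tendsto_typeProb_one hp hp_sum
    (inter_mem hA L_lt_mem)).eventually_const_le one_half_lt_one] with n hn half_le
  calc 1 / 2 * exp (-(n * c)) ≤ typeProb p (A ∩ {e | L e < c}) n * exp (-(n * c)) := by gcongr
    _ ≤ typeProb q (A ∩ {e | L e < c}) n := typeProb_mul_exp_le hp hq (fun e he => he.2.le) n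
    _ ≤ typeProb q A n :=
        typeProb_mono_of_inter_simplexSet (fun x => (hq x).le) hn fun e he => he.1.1

end TypeProb

theorem stmt9_general {X : Type*} [Fintype X] [DecidableEq X] {q : X → ℝ}
    (hq_pos : ∀ x, 0 < q x) {A : Set (X → ℝ)} (hA : A.Nonempty) (hA_sub : A ⊆ simplexSet X)
    (hreg : (Subtype.val ⁻¹' A : Set (simplexSet X)) ⊆ closure (interior (Subtype.val ⁻¹' A))) :
    Tendsto (fun n : ℕ => (1 / (n : ℝ)) * log (typeProb q A n)) atTop
      (𝓝 (-sInf ((fun p => Idiv p q) '' A))) := by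
  have hbdd := bddBelow_Idiv_image hq_pos hA_sub
  refine tendsto_one_div_mul_log_of_exp_bounds (Fintype.card X) one_half_pos
    (typeProb_le_pow_mul_exp hq_pos fun p hp => csInf_le hbdd ⟨p, hp, rfl⟩) fun c hc => ?_
  obtain ⟨p, hp, p_pos, hAp, Idiv_lt⟩ := exists_pos_Idiv_lt_of_sInf_lt hq_pos hA hA_sub hreg hc
  exact eventually_half_mul_exp_le_typeProb p_pos hp.2 hq_pos hAp Idiv_lt

/-- Finite Sanov theorem: if `Π` is the closure of its interior (relative to the simplex),
then `(1/n) log P(ν^n ∈ Π) → -inf_{p ∈ Π} I(p‖q)`. -/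
theorem stmt9 {X : Type*} [Fintype X] [DecidableEq X] (q : X → ℝ)
    (hq_pos : ∀ x, 0 < q x) (hq_sum : ∑ x, q x = 1)
    (Pi : Set (X → ℝ)) (hPine : Pi.Nonempty) (hPisub : Pi ⊆ simplexSet X)
    (hreg : (Subtype.val ⁻¹' Pi : Set {p : X → ℝ // p ∈ simplexSet X}) =
      closure (interior (Subtype.val ⁻¹' Pi))) :
    Tendsto (fun n : ℕ => (1 / (n : ℝ)) * Real.log (typeProb q Pi n)) atTop
      (nhds (-sInf ((fun p => Idiv p q) '' Pi))) :=
  stmt9_general hq_pos hPine hPisub hreg.subset
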